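/- Let Φ be a Leonard system with parameter array ({θ_i}; {θ*_i}; {φ_i}; {ϕ_i}), φ = φ_1⋯φ_d, ϕ = ϕ_1⋯ϕ_d. Then tr(E_0 E*_0) = ϕ/(η_d(θ_0) η*_d(θ*_0)), tr(E_0 E*_d) = φ/(η_d(θ_0) τ*_d(θ*_d)), tr(E_d E*_0) = φ/(τ_d(θ_d) η*_d(θ*_0)), and tr(E_d E*_d) = ϕ/(τ_d(θ_d) τ*_d(θ*_d)). -/

import Mathlib

open Matrix Polynomial

/-- A Leonard system in the matrix algebra `Mat_{d+1}(K)`: multiplicity-free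
elements `A`, `Astar` with orderings `E`, `Estar` of their primitive idempotents
satisfying the irreducible-tridiagonality conditions. -/
structure LeonardSystem (K : Type*) [Field K] (d : ℕ) where
  A : Matrix (Fin (d+1)) (Fin (d+1)) K
  Astar : Matrix (Fin (d+1)) (Fin (d+1)) K
  E : Fin (d+1) → Matrix (Fin (d+1)) (Fin (d+1)) K
  Estar : Fin (d+1) → Matrix (Fin (d+1)) (Fin (d+1)) K
  θ : Fin (d+1) → K
  θs : Fin (d+1) → K
  θ_inj : Function.Injective θ
  θs_inj : Function.Injective θs
  E_ne : ∀ i, E i ≠ 0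
  Es_ne : ∀ i, Estar i ≠ 0
  E_mul : ∀ i j, E i * E j = if i = j then E i else 0
  Es_mul : ∀ i j, Estar i * Estar j = if i = j then Estar i else 0
  E_sum : ∑ i, E i = 1
  Es_sum : ∑ i, Estar i = 1
  A_eq : A = ∑ i, θ i • E i
  As_eq : Astar = ∑ i, θs i • Estar i
  trid0 : ∀ i j : Fin (d+1), ((i : ℤ) - (j : ℤ)).natAbs > 1 → E i * Astar * E j = 0
  trid1 : ∀ i j : Fin (d+1), ((i : ℤ) - (j : ℤ)).natAbs = 1 → E i * Astar * E j ≠ 0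
  strid0 : ∀ i j : Fin (d+1), ((i : ℤ) - (j : ℤ)).natAbs > 1 → Estar i * A * Estar j = 0
  strid1 : ∀ i j : Fin (d+1), ((i : ℤ) - (j : ℤ)).natAbs = 1 → Estar i * A * Estar j ≠ 0

namespace LeonardSystem

variable {K : Type*} [Field K] {d : ℕ}

/-- Eigenvalues indexed by `ℕ` (junk value outside range). -/
def θN (L : LeonardSystem K d) (i : ℕ) : K := if h : i < d + 1 then L.θ ⟨i, h⟩ else 0

def θsN (L : LeonardSystem K d) (i : ℕ) : K := if h : i < d + 1 then L.θs ⟨i, h⟩ else 0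

/-- `τ_i(A) = (A-θ₀)(A-θ₁)⋯(A-θ_{i-1})`. -/
def tauA (L : LeonardSystem K d) : ℕ → Matrix (Fin (d+1)) (Fin (d+1)) K
  | 0 => 1
  | i + 1 => L.tauA i * (L.A - L.θN i • 1)

/-- `η_i(A) = (A-θ_d)(A-θ_{d-1})⋯(A-θ_{d-i+1})`. -/
def etaA (L : LeonardSystem K d) : ℕ → Matrix (Fin (d+1)) (Fin (d+1)) K
  | 0 => 1
  | i + 1 => L.etaA i * (L.A - L.θN (d - i) • 1)

/-- `τ*_i(A*)`. -/
def tausA (L : LeonardSystem K d) : ℕ → Matrix (Fin (d+1)) (Fin (d+1)) K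
  | 0 => 1
  | i + 1 => L.tausA i * (L.Astar - L.θsN i • 1)

/-- `η*_i(A*)`. -/
def etasA (L : LeonardSystem K d) : ℕ → Matrix (Fin (d+1)) (Fin (d+1)) K
  | 0 => 1
  | i + 1 => L.etasA i * (L.Astar - L.θsN (d - i) • 1)

/-- Scalar `τ_i(x)`. -/
def tauS (L : LeonardSystem K d) (i : ℕ) (x : K) : K := ∏ j ∈ Finset.range i, (x - L.θN j)

/-- Scalar `η_i(x)`. -/
def etaS (L : LeonardSystem K d) (i : ℕ) (x : K) : K := ∏ j ∈ Finset.range i, (x - L.θN (d - j))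

/-- Scalar `τ*_i(x)`. -/
def tausS (L : LeonardSystem K d) (i : ℕ) (x : K) : K := ∏ j ∈ Finset.range i, (x - L.θsN j)

/-- Scalar `η*_i(x)`. -/
def etasS (L : LeonardSystem K d) (i : ℕ) (x : K) : K := ∏ j ∈ Finset.range i, (x - L.θsN (d - j))

/-- First split sequence `φ_i`. -/
noncomputable def varphi (L : LeonardSystem K d) (i : ℕ) : K :=
  (L.θsN 0 - L.θsN i) * (L.tauA i * L.Estar 0).trace / (L.tauA (i-1) * L.Estar 0).trace

/-- Second split sequence `ϕ_i`. -/
noncomputable def phi (L : LeonardSystem K d) (i : ℕ) : K :=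
  (L.θsN 0 - L.θsN i) * (L.etaA i * L.Estar 0).trace / (L.etaA (i-1) * L.Estar 0).trace

/-- `φ₁φ₂⋯φ_r`. -/
noncomputable def varphiProd (L : LeonardSystem K d) (r : ℕ) : K :=
  ∏ j ∈ Finset.range r, L.varphi (j + 1)

/-- `ϕ₁ϕ₂⋯ϕ_r`. -/
noncomputable def phiProd (L : LeonardSystem K d) (r : ℕ) : K :=
  ∏ j ∈ Finset.range r, L.phi (j + 1)

/-- `φ_d φ_{d-1} ⋯ φ_{d-r+1}`. -/
noncomputable def varphiRevProd (L : LeonardSystem K d) (r : ℕ) : K :=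
  ∏ j ∈ Finset.range r, L.varphi (d - j)

/-- `ϕ_d ϕ_{d-1} ⋯ ϕ_{d-r+1}`. -/
noncomputable def phiRevProd (L : LeonardSystem K d) (r : ℕ) : K :=
  ∏ j ∈ Finset.range r, L.phi (d - j)

end LeonardSystem
namespace LeonardSystem

/-- A complete family of nonzero orthogonal idempotents. -/
structure OrthFam {K : Type*} [Field K] {d : ℕ}
    (F : Fin (d+1) → Matrix (Fin (d+1)) (Fin (d+1)) K) : Prop where
  ne : ∀ i, F i ≠ 0
  mul : ∀ i j, F i * F j = if i = j then F i else 0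
  sum : ∑ i, F i = 1

section
variable {K : Type*} [Field K] {d : ℕ} {F : Fin (d+1) → Matrix (Fin (d+1)) (Fin (d+1)) K}

/-- Each member has rank one. -/
theorem OrthFam.rankOne (h : OrthFam F) (i : Fin (d+1)) :
    ∃ g f : Fin (d+1) → K, F i = vecMulVec g f ∧ f ⬝ᵥ g = 1 := by
  have hex : ∀ k, ∃ g : Fin (d+1) → K, F k *ᵥ g ≠ 0 := by
    intro k
    by_contra! hc
    apply h.ne k
    apply Matrix.ext_of_mulVec_single
    intro j
    rw [hc, Matrix.zero_mulVec]
  choose g0 hg0 using hex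
  let P : Matrix (Fin (d+1)) (Fin (d+1)) K := Matrix.of fun r k => (F k *ᵥ g0 k) r
  have hcol : ∀ k, P.col k = F k *ᵥ g0 k := fun k => rfl
  have hli : LinearIndependent K P.col := by
    rw [Fintype.linearIndependent_iff]
    intro c hc k
    have h1 := congrArg (fun v => F k *ᵥ v) hc
    simp only [hcol, Matrix.mulVec_sum, Matrix.mulVec_smul, Matrix.mulVec_mulVec, h.mul,
      Matrix.mulVec_zero] at h1
    rw [Finset.sum_eq_single k] at h1
    · simpa [hg0 k] using h1
    · intro b _ hb
      simp [Ne.symm hb]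
    · simp
  have hu : IsUnit P := Matrix.linearIndependent_cols_iff_isUnit.mp hli
  have hdet : IsUnit P.det := (Matrix.isUnit_iff_isUnit_det _).mp hu
  have hFP : F i * P = Matrix.vecMulVec (P.col i) (Pi.single i 1) := by
    apply Matrix.ext_of_mulVec_single
    intro k
    rw [← Matrix.mulVec_mulVec, Matrix.mulVec_single_one, hcol, Matrix.mulVec_mulVec, h.mul]
    by_cases hik : i = k
    · subst hik
      ext r
      simp [Matrix.vecMulVec]
      rfl
    · ext r
      simp [hik, Matrix.vecMulVec]
  refine ⟨P.col i, Pi.single i 1 ᵥ* P⁻¹, ?_, ?_⟩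
  · rw [← Matrix.vecMulVec_mul, ← hFP, Matrix.mul_assoc, Matrix.mul_nonsing_inv _ hdet,
      Matrix.mul_one]
  · have : P.col i = P *ᵥ Pi.single i 1 := by simp
    rw [this, ← Matrix.dotProduct_mulVec, Matrix.mulVec_mulVec, Matrix.nonsing_inv_mul _ hdet]
    simp

theorem OrthFam.trace (h : OrthFam F) (i : Fin (d+1)) : (F i).trace = 1 := by
  obtain ⟨g, f, h1, h2⟩ := h.rankOne i
  rw [h1, Matrix.trace_vecMulVec, dotProduct_comm, h2]

theorem OrthFam.sandwich (h : OrthFam F) (i : Fin (d+1))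
    (X : Matrix (Fin (d+1)) (Fin (d+1)) K) : F i * X * F i = (X * F i).trace • F i := by
  obtain ⟨g, f, h1, h2⟩ := h.rankOne i
  rw [h1, Matrix.vecMulVec_mul, Matrix.vecMulVec_mul_vecMulVec, Matrix.mul_vecMulVec,
    Matrix.trace_vecMulVec, dotProduct_comm (X *ᵥ g), Matrix.dotProduct_mulVec]
  ext a b
  simp [Matrix.vecMulVec]
  try ring

theorem OrthFam.mul_ne (h : OrthFam F) (i : Fin (d+1))
    {X Y : Matrix (Fin (d+1)) (Fin (d+1)) K} (hX : X * F i ≠ 0) (hY : F i * Y ≠ 0) :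
    X * F i * Y ≠ 0 := by
  obtain ⟨g, f, h1, h2⟩ := h.rankOne i
  rw [h1, Matrix.mul_vecMulVec] at hX
  rw [h1, Matrix.vecMulVec_mul] at hY
  rw [h1, Matrix.mul_vecMulVec, Matrix.vecMulVec_mul]
  simp only [ne_eq, Matrix.vecMulVec_eq_zero, not_or] at *
  exact ⟨hX.1, hY.2⟩

theorem OrthFam.aeval (h : OrthFam F) {M : Matrix (Fin (d+1)) (Fin (d+1)) K}
    {c : Fin (d+1) → K} (hM : M = ∑ i, c i • F i) (p : K[X]) :
    Polynomial.aeval M p = ∑ i, p.eval (c i) • F i := by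
  induction p using Polynomial.induction_on' with
  | add p q hp hq => simp [hp, hq, add_smul, Finset.sum_add_distrib]
  | monomial n a =>
    have hpow : M ^ n = ∑ i, c i ^ n • F i := by
      induction n with
      | zero => simp [h.sum]
      | succ n ih =>
        rw [pow_succ, ih, hM, Finset.sum_mul]
        refine Finset.sum_congr rfl fun i _ => ?_
        rw [Finset.mul_sum, Finset.sum_eq_single i]
        · simp [h.mul, smul_smul, pow_succ, mul_comm]
        · intro b _ hb
          simp [h.mul, Ne.symm hb]
        · simp
    rw [Polynomial.aeval_monomial, hpow, Finset.mul_sum]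
    refine Finset.sum_congr rfl fun i _ => ?_
    simp [Polynomial.eval_monomial, mul_smul, Algebra.algebraMap_eq_smul_one,
      smul_comm a]

/-- Tridiagonal powers vanish far from the diagonal. -/
theorem OrthFam.pow_zero (h : OrthFam F) {B : Matrix (Fin (d+1)) (Fin (d+1)) K}
    (hB : ∀ i j : Fin (d+1), ((i : ℤ) - (j : ℤ)).natAbs > 1 → F i * B * F j = 0)
    (n : ℕ) (i j : Fin (d+1)) (hn : n < ((i : ℤ) - (j : ℤ)).natAbs) : F i * B ^ n * F j = 0 := by
  induction n generalizing j with
  | zero =>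
    have : i ≠ j := by rintro rfl; simp at hn
    simp [h.mul, this]
  | succ n ih =>
    have : F i * B ^ (n+1) * F j = ∑ m, (F i * B ^ n * F m) * (F m * B * F j) := by
      have : ∀ m, (F i * B ^ n * F m) * (F m * B * F j) = F i * B ^ n * F m * (B * F j) := by
        intro m
        have := h.mul m m
        simp only [if_true] at this
        calc _ = F i * B ^ n * (F m * F m) * (B * F j) := by simp only [Matrix.mul_assoc]
          _ = _ := by rw [this]
      rw [Finset.sum_congr rfl fun m _ => this m, ← Finset.sum_mul, ← Finset.mul_sum, h.sum,
        pow_succ]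
      simp only [Matrix.mul_assoc, Matrix.one_mul, Matrix.mul_one]
    rw [this]
    refine Finset.sum_eq_zero fun m _ => ?_
    by_cases hm : n < ((i : ℤ) - (m : ℤ)).natAbs
    · rw [ih m hm, Matrix.zero_mul]
    · rw [hB m j (by omega), Matrix.mul_zero]

theorem OrthFam.pow_ne (h : OrthFam F) {B : Matrix (Fin (d+1)) (Fin (d+1)) K}
    (hB : ∀ i j : Fin (d+1), ((i : ℤ) - (j : ℤ)).natAbs > 1 → F i * B * F j = 0)
    (hB1 : ∀ i j : Fin (d+1), ((i : ℤ) - (j : ℤ)).natAbs = 1 → F i * B * F j ≠ 0)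
    (n : ℕ) (hn : n < d + 1) : F 0 * B ^ n * F ⟨n, hn⟩ ≠ 0 := by
  induction n with
  | zero => simpa [h.mul] using h.ne 0
  | succ n ih =>
    have hn' : n < d + 1 := by omega
    have : F 0 * B ^ (n+1) * F ⟨n+1, hn⟩
        = F 0 * B ^ n * F ⟨n, hn'⟩ * (B * F ⟨n+1, hn⟩) := by
      have e : F 0 * B ^ (n+1) * F ⟨n+1, hn⟩
          = ∑ m, F 0 * B ^ n * F m * (B * F ⟨n+1, hn⟩) := by
        rw [← Finset.sum_mul, ← Finset.mul_sum, h.sum, pow_succ]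
        simp only [Matrix.mul_assoc, Matrix.one_mul, Matrix.mul_one]
      rw [e]
      refine Finset.sum_eq_single _ (fun m _ hm => ?_) (by simp)
      have hm' : (m : ℕ) ≠ n := fun h => hm (Fin.ext h)
      by_cases hlt : n < (m : ℕ)
      · rw [h.pow_zero hB n 0 m (by simp; omega), Matrix.zero_mul]
      · rw [Matrix.mul_assoc, ← Matrix.mul_assoc (F m), hB m _ (by simp; omega), Matrix.mul_zero]
    rw [this]
    refine h.mul_ne _ (ih hn') ?_
    rw [← Matrix.mul_assoc]
    exact hB1 _ _ (by simp)

theorem OrthFam.pow_ne' (h : OrthFam F) {B : Matrix (Fin (d+1)) (Fin (d+1)) K}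
    (hB : ∀ i j : Fin (d+1), ((i : ℤ) - (j : ℤ)).natAbs > 1 → F i * B * F j = 0)
    (hB1 : ∀ i j : Fin (d+1), ((i : ℤ) - (j : ℤ)).natAbs = 1 → F i * B * F j ≠ 0)
    (n : ℕ) (hn : n < d + 1) : F ⟨n, hn⟩ * B ^ n * F 0 ≠ 0 := by
  have hT : OrthFam (fun i => (F i)ᵀ) := by
    refine ⟨fun i => by simpa using h.ne i, fun i j => ?_, ?_⟩
    · rw [← Matrix.transpose_mul, h.mul]
      by_cases hij : i = j
      · simp [hij]
      · simp [hij, Ne.symm hij]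
    · rw [← Matrix.transpose_sum, h.sum, Matrix.transpose_one]
  have key := hT.pow_ne (B := Bᵀ) ?_ ?_ n hn
  · intro hc
    apply key
    rw [← Matrix.transpose_pow, ← Matrix.transpose_mul, ← Matrix.transpose_mul,
      ← Matrix.mul_assoc, hc, Matrix.transpose_zero]
  · intro i j hij
    rw [← Matrix.transpose_mul, ← Matrix.transpose_mul, ← Matrix.mul_assoc, hB j i (by omega),
      Matrix.transpose_zero]
  · intro i j hij hc
    rw [← Matrix.transpose_mul, ← Matrix.transpose_mul, ← Matrix.mul_assoc] at hc
    exact hB1 j i (by omega) (Matrix.transpose_eq_zero.mp hc)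

theorem OrthFam.poly_zero (h : OrthFam F) {B : Matrix (Fin (d+1)) (Fin (d+1)) K}
    (hB : ∀ i j : Fin (d+1), ((i : ℤ) - (j : ℤ)).natAbs > 1 → F i * B * F j = 0)
    (p : K[X]) (i j : Fin (d+1)) (hn : p.degree < (((i : ℤ) - (j : ℤ)).natAbs : ℕ)) :
    F i * Polynomial.aeval B p * F j = 0 := by
  rw [Polynomial.aeval_eq_sum_range, Finset.mul_sum, Finset.sum_mul]
  refine Finset.sum_eq_zero fun n _ => ?_
  by_cases hc : p.coeff n = 0
  · simp [hc]
  · have := lt_of_le_of_lt (Polynomial.le_degree_of_ne_zero hc) hn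
    have : n < ((i : ℤ) - (j : ℤ)).natAbs := by exact_mod_cast this
    rw [Matrix.mul_smul, Matrix.smul_mul, h.pow_zero hB n i j this, smul_zero]

end

section
variable {K : Type*} [Field K] {d : ℕ}

theorem orthE (L : LeonardSystem K d) : OrthFam L.E := ⟨L.E_ne, L.E_mul, L.E_sum⟩
theorem orthEs (L : LeonardSystem K d) : OrthFam L.Estar := ⟨L.Es_ne, L.Es_mul, L.Es_sum⟩

/-- The polynomial `∏_{j<i} (X - c j)`. -/
noncomputable def nodeP (c : ℕ → K) (i : ℕ) : K[X] := ∏ j ∈ Finset.range i, (X - C (c j))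

theorem nodeP_monic (c : ℕ → K) (i : ℕ) : (nodeP c i).Monic :=
  Polynomial.monic_prod_of_monic _ _ fun _ _ => Polynomial.monic_X_sub_C _

theorem nodeP_degree (c : ℕ → K) (i : ℕ) : (nodeP c i).degree = i := by
  simp [nodeP, Polynomial.degree_prod]

theorem nodeP_eval (c : ℕ → K) (i : ℕ) (x : K) :
    (nodeP c i).eval x = ∏ j ∈ Finset.range i, (x - c j) := by
  simp [nodeP, Polynomial.eval_prod]

theorem nodeP_eval_zero (c : ℕ → K) (i j : ℕ) (h : j < i) (x : K) (hx : x = c j) :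
    (nodeP c i).eval x = 0 := by
  rw [nodeP_eval]
  exact Finset.prod_eq_zero (Finset.mem_range.mpr h) (by simp [hx])

theorem degree_sub_lt {p q : K[X]} (hp : p.Monic) (hq : q.Monic) {i : ℕ}
    (h1 : p.degree = i) (h2 : q.degree = i) : (p - q).degree < i := by
  rw [← h1]
  exact Polynomial.degree_sub_lt_left (by rw [h1, h2]) hp.ne_zero
    (by rw [hp.leadingCoeff, hq.leadingCoeff])

theorem tauA_eq (L : LeonardSystem K d) (i : ℕ) : L.tauA i = aeval L.A (nodeP L.θN i) := by
  induction i with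
  | zero => simp [tauA, nodeP]
  | succ i ih =>
    rw [tauA, ih, nodeP, nodeP, Finset.prod_range_succ, map_mul]
    simp [Algebra.algebraMap_eq_smul_one]

theorem θN_fin (L : LeonardSystem K d) (i : Fin (d+1)) : L.θN i = L.θ i := by
  simp only [θN, i.isLt, dif_pos]
theorem θsN_fin (L : LeonardSystem K d) (i : Fin (d+1)) : L.θsN i = L.θs i := by
  simp only [θsN, i.isLt, dif_pos]

/-- A node polynomial of degree `d` vanishing at all eigenvalues but one. -/
theorem aeval_single {F : Fin (d+1) → Matrix (Fin (d+1)) (Fin (d+1)) K} (h : OrthFam F)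
    {M : Matrix (Fin (d+1)) (Fin (d+1)) K} {c : Fin (d+1) → K} (hM : M = ∑ i, c i • F i)
    (p : K[X]) (k : Fin (d+1)) (hp : ∀ j, j ≠ k → p.eval (c j) = 0) :
    aeval M p = p.eval (c k) • F k := by
  rw [h.aeval hM]
  exact Finset.sum_eq_single _ (fun j _ hj => by rw [hp j hj, zero_smul]) (by simp)

theorem E_Es_ne (L : LeonardSystem K d) (k : Fin (d+1)) : L.E k * L.Estar 0 ≠ 0 := by
  intro hc
  let p : K[X] := ∏ j ∈ Finset.univ.erase k, (X - C (L.θ j))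
  have hpm : p.Monic := Polynomial.monic_prod_of_monic _ _ fun _ _ => Polynomial.monic_X_sub_C _
  have hpd : p.degree = (d : ℕ) := by
    simp [p, Polynomial.degree_prod]
  have hp : aeval L.A p = p.eval (L.θ k) • L.E k := by
    refine aeval_single L.orthE L.A_eq p k fun j hj => ?_
    simp only [p, Polynomial.eval_prod]
    exact Finset.prod_eq_zero (Finset.mem_erase.mpr ⟨hj, Finset.mem_univ j⟩) (by simp)
  have h1 : L.Estar (Fin.last d) * aeval L.A (X ^ d - p) * L.Estar 0 = 0 := by
    refine L.orthEs.poly_zero L.strid0 _ _ _ ?_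
    simpa using degree_sub_lt (Polynomial.monic_X_pow d) hpm (Polynomial.degree_X_pow d) hpd
  rw [map_sub, hp, map_pow, aeval_X, Matrix.mul_sub, Matrix.sub_mul, Matrix.mul_smul,
    Matrix.smul_mul, Matrix.mul_assoc (L.Estar _) (L.E k), hc] at h1
  simp only [Matrix.mul_zero, smul_zero, sub_zero] at h1
  exact L.orthEs.pow_ne' L.strid0 L.strid1 d (by omega) h1

theorem E0_lower (L : LeonardSystem K d) (i : ℕ) (r : K[X]) (hr : r.degree < i) :
    L.E 0 * aeval L.Astar r * L.tauA i = 0 := by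
  rw [tauA_eq, L.orthE.aeval L.A_eq, Finset.mul_sum]
  refine Finset.sum_eq_zero fun k _ => ?_
  by_cases hk : (k : ℕ) < i
  · rw [nodeP_eval_zero _ i k hk _ (L.θN_fin k).symm, zero_smul, Matrix.mul_zero]
  · rw [Matrix.mul_smul, L.orthE.poly_zero L.trid0, smul_zero]
    refine lt_of_lt_of_le hr ?_
    have : i ≤ (((0 : Fin (d+1)) : ℤ) - (k : ℤ)).natAbs := by
      simp only [Fin.val_zero]
      omega
    exact_mod_cast this

theorem E0_monic (L : LeonardSystem K d) (i : ℕ) (p q : K[X]) (hp : p.Monic) (hq : q.Monic)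
    (h1 : p.degree = i) (h2 : q.degree = i) :
    L.E 0 * aeval L.Astar p * L.tauA i = L.E 0 * aeval L.Astar q * L.tauA i := by
  have := L.E0_lower i _ (degree_sub_lt hp hq h1 h2)
  rw [map_sub, Matrix.mul_sub, Matrix.sub_mul] at this
  exact sub_eq_zero.mp this

theorem upper_Es0 (L : LeonardSystem K d) (i : ℕ) :
    aeval L.Astar (nodeP (fun j => L.θsN (j+1)) i) * L.tauA i * L.Estar 0 =
      ((nodeP (fun j => L.θsN (j+1)) i).eval (L.θs 0) * (L.tauA i * L.Estar 0).trace)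
        • L.Estar 0 := by
  rw [L.orthEs.aeval L.As_eq, Finset.sum_mul, Finset.sum_mul, Finset.sum_eq_single 0]
  · rw [Matrix.smul_mul, Matrix.smul_mul, L.orthEs.sandwich, smul_smul]
  · intro k _ hk
    have hk0 : (k : ℕ) ≠ 0 := fun h => hk (Fin.ext h)
    by_cases hki : (k : ℕ) ≤ i
    · rw [nodeP_eval_zero _ i (k - 1) (by omega), zero_smul, Matrix.zero_mul, Matrix.zero_mul]
      rw [Nat.sub_add_cancel (by omega), L.θsN_fin]
    · rw [Matrix.smul_mul, Matrix.smul_mul, tauA_eq, L.orthEs.poly_zero L.strid0, smul_zero]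
      rw [nodeP_degree]
      have : i < ((k : ℤ) - ((0 : Fin (d+1)) : ℤ)).natAbs := by
        simp only [Fin.val_zero]
        omega
      exact_mod_cast this
  · simp

theorem trace_tau_ne (L : LeonardSystem K d) (i : ℕ) (hi : i < d + 1) :
    (L.tauA i * L.Estar 0).trace ≠ 0 := by
  intro hc
  have h1 := L.upper_Es0 i
  rw [hc, mul_zero, zero_smul] at h1
  have h2 := L.E0_monic i (X ^ i) _ (Polynomial.monic_X_pow i)
    (nodeP_monic (fun j => L.θsN (j+1)) i) (Polynomial.degree_X_pow i) (nodeP_degree _ i)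
  have h3 : L.E 0 * L.Astar ^ i * L.tauA i * L.Estar 0 = 0 := by
    have := congrArg (· * L.Estar 0) h2
    simp only [map_pow, aeval_X] at this
    rw [this, Matrix.mul_assoc, Matrix.mul_assoc, ← Matrix.mul_assoc (aeval _ _), h1,
      Matrix.mul_zero]
  have h4 : L.E 0 * L.Astar ^ i * L.tauA i
      = (nodeP L.θN i).eval (L.θ ⟨i, hi⟩) • (L.E 0 * L.Astar ^ i * L.E ⟨i, hi⟩) := by
    rw [tauA_eq, L.orthE.aeval L.A_eq, Finset.mul_sum, Finset.sum_eq_single ⟨i, hi⟩]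
    · rw [Matrix.mul_smul]
    · intro k _ hk
      have hk0 : (k : ℕ) ≠ i := fun h => hk (Fin.ext h)
      by_cases hk : (k : ℕ) < i
      · rw [nodeP_eval_zero _ i k hk _ (L.θN_fin k).symm, zero_smul, Matrix.mul_zero]
      · rw [Matrix.mul_smul, L.orthE.pow_zero L.trid0 _ _ _ (by simp; omega), smul_zero]
    · simp
  have h5 : (nodeP L.θN i).eval (L.θ ⟨i, hi⟩) ≠ 0 := by
    rw [nodeP_eval, Finset.prod_ne_zero_iff]
    intro j hj
    have hj := Finset.mem_range.mp hj
    have e : L.θN j = L.θ ⟨j, by omega⟩ := by simp [θN, show j < d + 1 by omega]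
    rw [e, sub_ne_zero]
    intro he
    have := congrArg Fin.val (L.θ_inj he)
    simp at this
    omega
  rw [h4, Matrix.smul_mul] at h3
  have h6 := (smul_eq_zero.mp h3).resolve_left h5
  exact L.orthE.mul_ne _ (L.orthE.pow_ne L.trid0 L.trid1 i hi) (L.E_Es_ne _) h6

theorem varphiProd_eq (L : LeonardSystem K d) (r : ℕ) (hr : r < d + 1) :
    L.varphiProd r =
      (nodeP (fun j => L.θsN (j+1)) r).eval (L.θs 0) * (L.tauA r * L.Estar 0).trace := by
  induction r with
  | zero => simp [varphiProd, nodeP, tauA, L.orthEs.trace]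
  | succ r ih =>
    have ih := ih (by omega)
    have hne := L.trace_tau_ne r (by omega)
    have e0 : L.θsN 0 = L.θs 0 := L.θsN_fin 0
    rw [varphiProd, Finset.prod_range_succ, ← varphiProd, ih, nodeP_eval, nodeP_eval,
      Finset.prod_range_succ, varphi, e0, Nat.add_sub_cancel]
    field_simp

theorem eta_eq (c : ℕ → K) (x : K) :
    ∏ j ∈ Finset.range d, (x - c (d - j)) = (nodeP (fun j => c (j+1)) d).eval x := by
  rw [nodeP_eval, ← Finset.prod_range_reflect]
  refine Finset.prod_congr rfl fun j hj => ?_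
  have := Finset.mem_range.mp hj
  rw [show d - (d - 1 - j) = j + 1 by omega]

theorem tauA_d (L : LeonardSystem K d) :
    L.tauA d = L.tauS d (L.θ (Fin.last d)) • L.E (Fin.last d) := by
  rw [tauA_eq, aeval_single L.orthE L.A_eq _ (Fin.last d), nodeP_eval, tauS]
  intro j hj
  have : (j : ℕ) ≠ d := fun h => hj (Fin.ext h)
  exact nodeP_eval_zero _ _ j (by omega) _ (L.θN_fin j).symm

theorem tausA_d (L : LeonardSystem K d) :
    aeval L.Astar (nodeP L.θsN d) = L.tausS d (L.θs (Fin.last d)) • L.Estar (Fin.last d) := by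
  rw [aeval_single L.orthEs L.As_eq _ (Fin.last d), nodeP_eval, tausS]
  intro j hj
  have : (j : ℕ) ≠ d := fun h => hj (Fin.ext h)
  exact nodeP_eval_zero _ _ j (by omega) _ (L.θsN_fin j).symm

theorem etaA_d (L : LeonardSystem K d) :
    aeval L.A (nodeP (fun j => L.θN (j+1)) d) = L.etaS d (L.θ 0) • L.E 0 := by
  rw [aeval_single L.orthE L.A_eq _ 0, etaS, eta_eq]
  intro j hj
  have : (j : ℕ) ≠ 0 := fun h => hj (Fin.ext h)
  refine nodeP_eval_zero _ _ (j - 1) (by omega) _ ?_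
  rw [Nat.sub_add_cancel (by omega), L.θN_fin]

theorem corner_d0 (L : LeonardSystem K d) :
    L.varphiProd d =
      (L.tauS d (L.θ (Fin.last d)) * L.etasS d (L.θs 0)) *
        (L.E (Fin.last d) * L.Estar 0).trace := by
  rw [L.varphiProd_eq d (by omega), L.tauA_d, etasS, eta_eq, Matrix.smul_mul, Matrix.trace_smul,
    smul_eq_mul]
  ring

theorem corner_0d (L : LeonardSystem K d) :
    L.varphiProd d =
      (L.etaS d (L.θ 0) * L.tausS d (L.θs (Fin.last d))) *
        (L.E 0 * L.Estar (Fin.last d)).trace := by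
  have h1 := L.E0_monic d _ _ (nodeP_monic (fun j => L.θsN (j+1)) d) (nodeP_monic L.θsN d)
    (nodeP_degree _ d) (nodeP_degree _ d)
  have h2 : L.varphiProd d • (L.E 0 * L.Estar 0)
      = L.E 0 * aeval L.Astar (nodeP L.θsN d) * L.tauA d * L.Estar 0 := by
    rw [← h1, L.varphiProd_eq d (by omega), ← Matrix.mul_smul, ← L.upper_Es0]
    simp only [Matrix.mul_assoc]
  have h3 : L.Estar (Fin.last d) * L.tauA d * L.Estar 0 =
      L.Estar (Fin.last d) * aeval L.A (nodeP (fun j => L.θN (j+1)) d) * L.Estar 0 := by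
    have : L.Estar (Fin.last d) * aeval L.A (nodeP L.θN d - nodeP (fun j => L.θN (j+1)) d)
        * L.Estar 0 = 0 := by
      refine L.orthEs.poly_zero L.strid0 _ _ _ ?_
      simpa using degree_sub_lt (nodeP_monic L.θN d) (nodeP_monic (fun j => L.θN (j+1)) d)
        (nodeP_degree _ d) (nodeP_degree _ d)
    rw [map_sub, Matrix.mul_sub, Matrix.sub_mul] at this
    rw [tauA_eq]
    exact sub_eq_zero.mp this
  have h4 : L.varphiProd d • (L.E 0 * L.Estar 0) =
      ((L.etaS d (L.θ 0) * L.tausS d (L.θs (Fin.last d))) *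
        (L.E 0 * L.Estar (Fin.last d)).trace) • (L.E 0 * L.Estar 0) := by
    rw [h2, L.tausA_d]
    simp only [Matrix.mul_smul, Matrix.smul_mul]
    rw [Matrix.mul_assoc, Matrix.mul_assoc, ← Matrix.mul_assoc (L.Estar _), h3, L.etaA_d]
    simp only [Matrix.mul_smul, Matrix.smul_mul]
    rw [← Matrix.mul_assoc, ← Matrix.mul_assoc, L.orthE.sandwich, Matrix.smul_mul, smul_smul,
      smul_smul, Matrix.trace_mul_comm (L.E 0)]
    congr 1
    ring
  have h5 := sub_eq_zero.mpr h4
  rw [← sub_smul] at h5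
  exact sub_eq_zero.mp ((smul_eq_zero.mp h5).resolve_right (L.E_Es_ne 0))

theorem tauS_ne (L : LeonardSystem K d) : L.tauS d (L.θ (Fin.last d)) ≠ 0 := by
  rw [tauS, Finset.prod_ne_zero_iff]
  intro j hj
  have hj := Finset.mem_range.mp hj
  have e : L.θN j = L.θ ⟨j, by omega⟩ := by simp [θN, show j < d + 1 by omega]
  rw [e, sub_ne_zero]
  intro he
  have := congrArg Fin.val (L.θ_inj he)
  simp at this
  omega

theorem tausS_ne (L : LeonardSystem K d) : L.tausS d (L.θs (Fin.last d)) ≠ 0 := by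
  rw [tausS, Finset.prod_ne_zero_iff]
  intro j hj
  have hj := Finset.mem_range.mp hj
  have e : L.θsN j = L.θs ⟨j, by omega⟩ := by simp [θsN, show j < d + 1 by omega]
  rw [e, sub_ne_zero]
  intro he
  have := congrArg Fin.val (L.θs_inj he)
  simp at this
  omega

theorem etaS_ne (L : LeonardSystem K d) : L.etaS d (L.θ 0) ≠ 0 := by
  rw [etaS, Finset.prod_ne_zero_iff]
  intro j hj
  have hj := Finset.mem_range.mp hj
  have e : L.θN (d - j) = L.θ ⟨d - j, by omega⟩ := by simp [θN, show d - j < d + 1 by omega]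
  rw [e, sub_ne_zero]
  intro he
  have := congrArg Fin.val (L.θ_inj he)
  simp at this
  omega

theorem etasS_ne (L : LeonardSystem K d) : L.etasS d (L.θs 0) ≠ 0 := by
  rw [etasS, Finset.prod_ne_zero_iff]
  intro j hj
  have hj := Finset.mem_range.mp hj
  have e : L.θsN (d - j) = L.θs ⟨d - j, by omega⟩ := by simp [θsN, show d - j < d + 1 by omega]
  rw [e, sub_ne_zero]
  intro he
  have := congrArg Fin.val (L.θs_inj he)
  simp at this
  omega

/-- The system with the ordering of the `E i` reversed. -/
def rev (L : LeonardSystem K d) : LeonardSystem K d where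
  A := L.A
  Astar := L.Astar
  E i := L.E i.rev
  Estar := L.Estar
  θ i := L.θ i.rev
  θs := L.θs
  θ_inj := L.θ_inj.comp Fin.rev_injective
  θs_inj := L.θs_inj
  E_ne i := L.E_ne _
  Es_ne := L.Es_ne
  E_mul i j := by simp [L.E_mul]
  Es_mul := L.Es_mul
  E_sum := by rw [← L.E_sum]; exact Equiv.sum_comp Fin.revPerm L.E
  Es_sum := L.Es_sum
  A_eq := by rw [L.A_eq]; exact (Equiv.sum_comp Fin.revPerm (fun i => L.θ i • L.E i)).symm
  As_eq := L.As_eq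
  trid0 i j h := L.trid0 _ _ (by simp only [Fin.val_rev]; omega)
  trid1 i j h := L.trid1 _ _ (by simp only [Fin.val_rev]; omega)
  strid0 := L.strid0
  strid1 := L.strid1

theorem rev_θN (L : LeonardSystem K d) (i : ℕ) (hi : i ≤ d) : L.rev.θN i = L.θN (d - i) := by
  simp only [θN, rev, show i < d + 1 by omega, show d - i < d + 1 by omega, dif_pos]
  congr 1
  ext
  simp [Fin.val_rev]

theorem rev_tauA (L : LeonardSystem K d) (i : ℕ) (hi : i ≤ d + 1) : L.rev.tauA i = L.etaA i := by
  induction i with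
  | zero => rfl
  | succ i ih =>
    rw [tauA, etaA, ih (by omega), rev_θN _ _ (by omega)]
    rfl

theorem rev_varphiProd (L : LeonardSystem K d) : L.rev.varphiProd d = L.phiProd d := by
  rw [varphiProd, phiProd]
  refine Finset.prod_congr rfl fun j hj => ?_
  have hj := Finset.mem_range.mp hj
  rw [varphi, phi, rev_tauA _ _ (by omega), rev_tauA _ _ (by omega)]
  rfl

theorem rev_tauS (L : LeonardSystem K d) (x : K) : L.rev.tauS d x = L.etaS d x := by
  rw [tauS, etaS]
  refine Finset.prod_congr rfl fun j hj => ?_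
  have hj := Finset.mem_range.mp hj
  rw [rev_θN _ _ (by omega)]

theorem rev_etaS (L : LeonardSystem K d) (x : K) : L.rev.etaS d x = L.tauS d x := by
  rw [tauS, etaS]
  refine Finset.prod_congr rfl fun j hj => ?_
  have hj := Finset.mem_range.mp hj
  rw [rev_θN _ _ (by omega), show d - (d - j) = j by omega]

end
end LeonardSystem

/-- The four corner traces `tr(E_0E*_0)`, `tr(E_0E*_d)`, `tr(E_dE*_0)`, `tr(E_dE*_d)`. -/
theorem LeonardSystem.trace_corners {K : Type*} [Field K] {d : ℕ}
    (L : LeonardSystem K d) :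
    (L.E 0 * L.Estar 0).trace = L.phiProd d / (L.etaS d (L.θ 0) * L.etasS d (L.θs 0)) ∧
    (L.E 0 * L.Estar (Fin.last d)).trace =
      L.varphiProd d / (L.etaS d (L.θ 0) * L.tausS d (L.θs (Fin.last d))) ∧
    (L.E (Fin.last d) * L.Estar 0).trace =
      L.varphiProd d / (L.tauS d (L.θ (Fin.last d)) * L.etasS d (L.θs 0)) ∧
    (L.E (Fin.last d) * L.Estar (Fin.last d)).trace =
      L.phiProd d / (L.tauS d (L.θ (Fin.last d)) * L.tausS d (L.θs (Fin.last d))) := by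
  have h1 := L.rev.corner_d0
  have h4 := L.rev.corner_0d
  rw [rev_varphiProd, rev_tauS] at h1
  rw [rev_varphiProd, rev_etaS] at h4
  have e0 : L.rev.θ (Fin.last d) = L.θ 0 := by simp [rev]
  have e1 : L.rev.θ 0 = L.θ (Fin.last d) := by simp [rev]
  have e2 : L.rev.E (Fin.last d) = L.E 0 := by simp [rev]
  have e3 : L.rev.E 0 = L.E (Fin.last d) := by simp [rev]
  rw [e0, e2] at h1
  rw [e1, e3] at h4
  refine ⟨?_, ?_, ?_, ?_⟩
  · rw [eq_div_iff (mul_ne_zero L.etaS_ne L.etasS_ne), h1, mul_comm]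
    rfl
  · rw [eq_div_iff (mul_ne_zero L.etaS_ne L.tausS_ne), L.corner_0d, mul_comm]
  · rw [eq_div_iff (mul_ne_zero L.tauS_ne L.etasS_ne), L.corner_d0, mul_comm]
  · rw [eq_div_iff (mul_ne_zero L.tauS_ne L.tausS_ne), h4, mul_comm]
    rfl
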